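/- arXiv:1507.06167 — 2 statements merged into one kernel-verified Lean document; each statement's English description precedes it below -/
import Mathlib

section
/- For every n ≥ 1, every set X, every i ∈ {1,…,n}, and all n-ary partial functions f, g on X: g is a restriction of the i-th fixset Fᵢf (i.e., the graph of g is contained in the graph of Fᵢf) if and only if Dᵢg = g and ⟨D₁g,…,Dₙg⟩∘f = g. -/
/-!
Both sides say that `g(x)`, whenever defined, equals both `xᵢ` and `f(x)`: `Dᵢg = g` means that
`g(x) = xᵢ` on the domain of `g`, and since `⟨D₁g,…,Dₙg⟩∘f` is `f` restricted to the domain of `g`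
(`mem_nComp_nDom`), the second equation means that `g` is a restriction of `f`.
-/

/-- Composition of `n`-ary partial functions: `⟨f₁,…,fₙ⟩∘g` is defined at `x`
iff each `fᵢ(x)` is defined and `g` is defined at `(f₁(x),…,fₙ(x))`,
in which case its value is `g(f₁(x),…,fₙ(x))`. -/
def nComp {n : ℕ} {X : Type*} (f : Fin n → ((Fin n → X) →. X))
    (g : (Fin n → X) →. X) : (Fin n → X) →. X := fun x =>
  Part.mk (∃ h : ∀ i, (f i x).Dom, (g fun i => (f i x).get (h i)).Dom)
    (fun h => (g fun i => (f i x).get (h.choose i)).get h.choose_spec)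

/-- The `i`-th domain operation: `Dᵢf` is defined at `x` with value `xᵢ` iff `f(x)` is defined. -/
def nDom {n : ℕ} {X : Type*} (i : Fin n) (f : (Fin n → X) →. X) :
    (Fin n → X) →. X := fun x => Part.mk (f x).Dom (fun _ => x i)

/-- The `i`-th antidomain operation: `Aᵢf` is defined at `x` with value `xᵢ` iff `f(x)` is undefined. -/
def nAnti {n : ℕ} {X : Type*} (i : Fin n) (f : (Fin n → X) →. X) :
    (Fin n → X) →. X := fun x => Part.mk (¬ (f x).Dom) (fun _ => x i)
/-- The `i`-th fixset operation: `Fᵢf` is defined at `x` with value `xᵢ` iff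
`f(x)` is defined and equal to `xᵢ`. -/
def nFix {n : ℕ} {X : Type*} (i : Fin n) (f : (Fin n → X) →. X) :
    (Fin n → X) →. X := fun x => Part.mk (x i ∈ f x) (fun _ => x i)

theorem mem_nDom {n : ℕ} {X : Type*} (i : Fin n) (g : (Fin n → X) →. X)
    (x : Fin n → X) (y : X) : y ∈ nDom i g x ↔ (g x).Dom ∧ x i = y :=
  ⟨fun ⟨h, e⟩ => ⟨h, e⟩, fun ⟨h, e⟩ => ⟨h, e⟩⟩

theorem mem_nFix {n : ℕ} {X : Type*} (i : Fin n) (f : (Fin n → X) →. X)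
    (x : Fin n → X) (y : X) : y ∈ nFix i f x ↔ x i ∈ f x ∧ x i = y :=
  ⟨fun ⟨h, e⟩ => ⟨h, e⟩, fun ⟨h, e⟩ => ⟨h, e⟩⟩

/-- `⟨D₁g,…,Dₙg⟩∘f` is the restriction of `f` to the domain of `g`. The index `i` witnesses
`n ≥ 1`; for `n = 0` the composition would be `f` itself. -/
theorem mem_nComp_nDom {n : ℕ} {X : Type*} (i : Fin n) (f g : (Fin n → X) →. X)
    (x : Fin n → X) (y : X) :
    y ∈ nComp (fun j => nDom j g) f x ↔ (g x).Dom ∧ y ∈ f x :=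
  ⟨fun ⟨⟨h, hf⟩, e⟩ => ⟨h i, hf, e⟩, fun ⟨h, hf, e⟩ => ⟨⟨fun _ => h, hf⟩, e⟩⟩

/-- `g` is a restriction of `Fᵢf` iff `Dᵢg = g` and `⟨Dg⟩∘f = g`. -/
theorem fixset_restriction_characterisation {n : ℕ} (hn : 1 ≤ n) (X : Type*)
    (i : Fin n) (f g : (Fin n → X) →. X) :
    (∀ (x : Fin n → X) (y : X), y ∈ g x → y ∈ nFix i f x) ↔
      (nDom i g = g ∧ nComp (fun j => nDom j g) f = g) := by
  constructor
  · intro H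
    have key : ∀ x y, y ∈ g x → x i ∈ f x ∧ x i = y := fun x y hy =>
      (mem_nFix i f x y).1 (H x y hy)
    refine ⟨PFun.ext fun x y => ?_, PFun.ext fun x y => ?_⟩
    · rw [mem_nDom]
      constructor
      · rintro ⟨hd, rfl⟩
        have hg := Part.get_mem hd
        rwa [← (key x _ hg).2] at hg
      · intro hy
        exact ⟨Part.dom_iff_mem.2 ⟨y, hy⟩, (key x y hy).2⟩
    · rw [mem_nComp_nDom i]
      constructor
      · rintro ⟨hd, hf⟩
        have hg := Part.get_mem hd
        obtain ⟨h1, h2⟩ := key x _ hg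
        rwa [← h2, Part.mem_unique h1 hf] at hg
      · intro hy
        obtain ⟨h1, rfl⟩ := key x y hy
        exact ⟨Part.dom_iff_mem.2 ⟨_, hy⟩, h1⟩
  · rintro ⟨hD, hC⟩ x y hy
    have h1 : y ∈ nDom i g x := by rwa [hD]
    have h2 : y ∈ nComp (fun j => nDom j g) f x := by rwa [hC]
    obtain ⟨-, rfl⟩ := (mem_nDom i g x y).1 h1
    exact (mem_nFix i f x _).2 ⟨((mem_nComp_nDom i f g x _).1 h2).2, rfl⟩
end

section
/- Under the axioms (1)–(9), for all i, j ∈ {1,…,n} and all a₁,…,aₙ, b ∈ A: ⟨D(⟨a⟩∘b)⟩∘Dᵢaⱼ = Dᵢ(⟨a⟩∘b); the twisted law for domain ⟨a⟩∘Dᵢb = ⟨D(⟨a⟩∘b)⟩∘aᵢ holds; and if ⟨a⟩∘Aᵢb = 0 then ⟨a⟩∘Aⱼb = 0. -/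
/-!
Each tuple `⟨Aa⟩` or `⟨Da⟩` acts on the left as a "test", restricting its argument to the
complement of the domain of `a`, respectively to that domain. Applying the twisted law to
`b = 0` gives `⟨a⟩∘πᵢ = ⟨Da₁⟩∘⋯∘⟨Daₙ⟩∘aᵢ`, so the law reads
`⟨a⟩∘Aᵢb = ⟨A(⟨a⟩∘b)⟩∘(⟨a⟩∘πᵢ)` (`comp_anti`). With `⟨a⟩ = ⟨π⟩` this yields
`⟨Ab⟩∘πᵢ = Aᵢb`. It follows that `⟨Aa⟩` and `⟨Da⟩` are idempotent and annihilate each other,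
and the quasiequation (7) shows that all tests commute (`avec_comm`).

* First law: `⟨Aaⱼ⟩∘(⟨a⟩∘b) = 0` by superassociativity and (4), hence `⟨Aaⱼ⟩` annihilates
  `Dᵢ(⟨a⟩∘b)` (`comp_dom_eq_zero`), so that `⟨Daⱼ⟩` fixes it; tests commute.
* Twisted law for domain: with `e = ⟨a⟩∘b`, both sides agree after `⟨De⟩` and after `⟨Ae⟩`,
  so (7) applies. The first law lets `⟨De⟩` absorb the chain `⟨Da₁⟩∘⋯∘⟨Daₙ⟩`.
* Last law: if the test `q = ⟨Ae⟩∘⟨Da₁⟩∘⋯∘⟨Daₙ⟩` annihilates `aᵢ`, it annihilates `⟨Daᵢ⟩`,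
  which is already a factor of `q`; so `q` annihilates everything.
-/

/-- An algebra with an `(n+1)`-ary composition `⟨a₁,…,aₙ⟩∘b` and
`n` antidomain operations `A₁,…,Aₙ`. -/
structure MAlg (n : ℕ) (A : Type*) where
  comp : (Fin n → A) → A → A
  anti : Fin n → A → A

namespace MAlg

variable {n : ℕ} {A : Type*} [Inhabited A]

/-- `⟨Aa⟩ = (A₁a,…,Aₙa)`. -/
def avec (M : MAlg n A) (a : A) : Fin n → A := fun i => M.anti i a

/-- `0 := ⟨Ab⟩∘b` (independent of `b` by axiom (3)). -/
def zero (M : MAlg n A) : A := M.comp (M.avec default) default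

/-- `πᵢ := Aᵢ0`. -/
def pi (M : MAlg n A) (i : Fin n) : A := M.anti i M.zero

/-- `Dᵢa := Aᵢ(Aᵢa)`. -/
def dom (M : MAlg n A) (i : Fin n) (a : A) : A := M.anti i (M.anti i a)

/-- `⟨Da⟩ = (D₁a,…,Dₙa)`. -/
def dvec (M : MAlg n A) (a : A) : Fin n → A := fun i => M.dom i a

/-- The chain `⟨Da₁⟩∘(⟨Da₂⟩∘(⋯∘(⟨Daₙ⟩∘t)))`. -/
def dchain (M : MAlg n A) (a : Fin n → A) (t : A) : A :=
  (List.ofFn a).foldr (fun u acc => M.comp (M.dvec u) acc) t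

/-- Axioms (1)–(9). -/
structure Ax (M : MAlg n A) : Prop where
  /-- (1) superassociativity -/
  ax1 : ∀ (a b : Fin n → A) (c : A),
    M.comp (fun i => M.comp a (b i)) c = M.comp a (M.comp b c)
  /-- (2) `⟨π₁,…,πₙ⟩∘a = a` -/
  ax2 : ∀ a : A, M.comp M.pi a = a
  /-- (3) `⟨Aa⟩∘a = ⟨Ab⟩∘b` -/
  ax3 : ∀ a b : A, M.comp (M.avec a) a = M.comp (M.avec b) b
  /-- (4) `⟨a₁,…,0,…,aₙ⟩∘b = 0` with `0` in any position -/
  ax4 : ∀ (a : Fin n → A) (i : Fin n) (b : A),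
    M.comp (Function.update a i M.zero) b = M.zero
  /-- (5) `⟨a⟩∘0 = 0` -/
  ax5 : ∀ a : Fin n → A, M.comp a M.zero = M.zero
  /-- (6) the twisted laws for antidomain -/
  ax6 : ∀ (a : Fin n → A) (i : Fin n) (b : A),
    M.comp a (M.anti i b) = M.comp (M.avec (M.comp a b)) (M.dchain a (a i))
  /-- (7) the quasiequation -/
  ax7 : ∀ a b c : A,
    M.comp (M.dvec a) b = M.comp (M.dvec a) c →
    M.comp (M.avec a) b = M.comp (M.avec a) c → b = c
  /-- (8) `⟨Da⟩∘a = a` -/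
  ax8 : ∀ a : A, M.comp (M.dvec a) a = a
  /-- (9) `Aᵢ(Aⱼa) = Aᵢ(Aₖa)` -/
  ax9 : ∀ (i j k : Fin n) (a : A), M.anti i (M.anti j a) = M.anti i (M.anti k a)

end MAlg

namespace MAlg

variable {n : ℕ} {A : Type*} [Inhabited A] {M : MAlg n A}

namespace Ax

theorem avec_self (hM : M.Ax) (a : A) : M.comp (M.avec a) a = M.zero :=
  hM.ax3 a default

theorem anti_zero_comp (hM : M.Ax) (c : A) : M.comp (M.avec M.zero) c = c :=
  hM.ax2 c

/-- A tuple with a zero entry annihilates everything. -/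
theorem comp_of_entry_zero (hM : M.Ax) (a : Fin n → A) (i : Fin n) (h : a i = M.zero) (b : A) :
    M.comp a b = M.zero := by
  have := hM.ax4 a i b
  rwa [← h, Function.update_eq_self, h] at this

theorem comp_pi (hM : M.Ax) (a : Fin n → A) (i : Fin n) :
    M.comp a (M.pi i) = M.dchain a (a i) := by
  rw [pi, hM.ax6, hM.ax5, hM.anti_zero_comp]

/-- The twisted law for antidomain, with the chain of domains hidden in `⟨a⟩∘πᵢ`. -/
theorem comp_anti (hM : M.Ax) (a : Fin n → A) (i : Fin n) (b : A) :
    M.comp a (M.anti i b) = M.comp (M.avec (M.comp a b)) (M.comp a (M.pi i)) := by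
  rw [hM.ax6, hM.comp_pi]

theorem avec_pi (hM : M.Ax) (b : A) (i : Fin n) :
    M.comp (M.avec b) (M.pi i) = M.anti i b := by
  have h := hM.comp_anti M.pi i b
  rw [hM.ax2, hM.ax2, hM.ax2] at h
  exact h.symm

theorem avec_anti_self (hM : M.Ax) (a : A) (i : Fin n) :
    M.comp (M.avec a) (M.anti i a) = M.anti i a := by
  rw [hM.comp_anti, hM.avec_self, hM.anti_zero_comp, hM.avec_pi]

/-- By axiom (9), a domain tuple is an antidomain tuple. -/
theorem dvec_eq (hM : M.Ax) (a : A) (j : Fin n) : M.dvec a = M.avec (M.anti j a) :=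
  funext fun i => hM.ax9 i i j a

theorem avec_idem (hM : M.Ax) (a c : A) :
    M.comp (M.avec a) (M.comp (M.avec a) c) = M.comp (M.avec a) c := by
  rw [← hM.ax1]
  congr 1
  exact funext fun i => hM.avec_anti_self a i

theorem dvec_anti (hM : M.Ax) (a : A) (i : Fin n) :
    M.comp (M.dvec a) (M.anti i a) = M.zero := by
  rw [hM.dvec_eq a i, hM.avec_self]

theorem avec_dom (hM : M.Ax) (a : A) (i : Fin n) :
    M.comp (M.avec a) (M.dom i a) = M.zero := by
  rw [dom, hM.comp_anti, hM.avec_anti_self, hM.avec_pi, ← hM.dvec_eq, hM.dvec_anti]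

/-- By superassociativity and (4), a single vanishing entry `⟨s⟩∘tᵢ` kills `⟨s⟩∘(⟨t⟩∘c)`. -/
theorem comp_comp_zero (hM : M.Ax) (s t : Fin n → A) (i : Fin n)
    (h : M.comp s (t i) = M.zero) (c : A) : M.comp s (M.comp t c) = M.zero := by
  rw [← hM.ax1]
  exact hM.comp_of_entry_zero _ i h c

theorem avec_anti (hM : M.Ax) (a b : A) (i : Fin n) :
    M.comp (M.avec a) (M.anti i b) =
      M.comp (M.avec (M.comp (M.avec a) b)) (M.anti i a) := by
  rw [hM.comp_anti, hM.avec_pi]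

theorem avec_avec (hM : M.Ax) (a b c : A) :
    M.comp (M.avec a) (M.comp (M.avec b) c) =
      M.comp (M.avec (M.comp (M.avec a) b)) (M.comp (M.avec a) c) := by
  rw [← hM.ax1, ← hM.ax1]
  congr 1
  exact funext fun i => hM.avec_anti a b i

theorem avec_comm_anti (hM : M.Ax) (a b : A) (i : Fin n) :
    M.comp (M.avec a) (M.anti i b) = M.comp (M.avec b) (M.anti i a) := by
  apply hM.ax7 a
  · rw [hM.comp_comp_zero _ _ i (hM.dvec_anti a i), hM.dvec_eq a i, hM.avec_avec,
      hM.avec_self, hM.ax5]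
  · rw [hM.avec_idem, hM.avec_avec, hM.avec_anti_self, hM.avec_anti]

/-- Antidomain tests commute. -/
theorem avec_comm (hM : M.Ax) (a b c : A) :
    M.comp (M.avec a) (M.comp (M.avec b) c) = M.comp (M.avec b) (M.comp (M.avec a) c) := by
  rw [← hM.ax1, ← hM.ax1]
  congr 1
  exact funext fun i => hM.avec_comm_anti a b i

/-- A tuple annihilating `x` annihilates `Dᵢx`: by the twisted law `⟨t⟩∘Aᵢx` is then `⟨t⟩∘πᵢ`,
and so `⟨t⟩∘Dᵢx = ⟨A(⟨t⟩∘πᵢ)⟩∘(⟨t⟩∘πᵢ) = 0`. -/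
theorem comp_dom_eq_zero (hM : M.Ax) (t : Fin n → A) (i : Fin n) (x : A)
    (h : M.comp t x = M.zero) :
    M.comp t (M.dom i x) = M.zero := by
  rw [dom, hM.comp_anti, hM.comp_anti t i x, h, hM.anti_zero_comp, hM.avec_self]

theorem dvec_dom (hM : M.Ax) (i j : Fin n) (a : Fin n → A) (b : A) :
    M.comp (M.dvec (M.comp a b)) (M.dom i (a j)) = M.dom i (M.comp a b) := by
  have h0 : M.comp (M.avec (a j)) (M.dom i (M.comp a b)) = M.zero :=
    hM.comp_dom_eq_zero _ i _
      (hM.comp_comp_zero _ _ j (hM.avec_self (a j)) b)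
  have h1 : M.comp (M.dvec (M.comp a b)) (M.dom i (a j)) =
      M.comp (M.dvec (a j)) (M.dom i (M.comp a b)) := by
    rw [hM.dvec_eq _ i, hM.dvec_eq _ i]
    exact hM.avec_comm_anti _ _ i
  rw [h1]
  apply hM.ax7 (a j)
  · rw [hM.dvec_eq _ i, hM.avec_idem]
  · rw [hM.comp_comp_zero _ _ i (hM.avec_dom (a j) i), h0]

/-- Tests commute with the chain `⟨Da₁⟩∘⋯∘⟨Daₙ⟩`. The index `i` witnesses `n ≥ 1`. -/
theorem foldr_comm (hM : M.Ax) (i : Fin n) (l : List A) (u c : A) :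
    l.foldr (fun u acc => M.comp (M.dvec u) acc) (M.comp (M.avec u) c) =
      M.comp (M.avec u) (l.foldr (fun u acc => M.comp (M.dvec u) acc) c) := by
  induction l with
  | nil => rfl
  | cons x l ih =>
    simp only [List.foldr_cons]
    rw [ih, hM.dvec_eq x i, hM.avec_comm]

/-- The chain absorbs each of its factors. -/
theorem foldr_absorb (hM : M.Ax) (i : Fin n) (l : List A) (u c : A) (hu : u ∈ l) :
    l.foldr (fun u acc => M.comp (M.dvec u) acc) (M.comp (M.dvec u) c) =
      l.foldr (fun u acc => M.comp (M.dvec u) acc) c := by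
  induction l with
  | nil => simp at hu
  | cons x l ih =>
    simp only [List.foldr_cons]
    rcases List.mem_cons.1 hu with rfl | h
    · rw [hM.dvec_eq u i, hM.foldr_comm i, hM.avec_idem]
    · rw [ih h]

/-- A chain of tests is composition with a single tuple. -/
theorem foldr_eq_comp (hM : M.Ax) (l : List A) (c : A) :
    l.foldr (fun u acc => M.comp (M.dvec u) acc) c =
      M.comp (fun k => l.foldr (fun u acc => M.comp (M.dvec u) acc) (M.pi k)) c := by
  induction l with
  | nil => exact (hM.ax2 c).symm
  | cons x l ih =>
    simp only [List.foldr_cons]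
    rw [hM.ax1, ← ih]

/-- The test of the domain of `⟨a⟩∘b` absorbs the chain of the domains of the `aⱼ`. -/
theorem dvec_dchain (hM : M.Ax) (a : Fin n → A) (b c : A) :
    M.comp (M.dvec (M.comp a b)) (M.dchain a c) = M.comp (M.dvec (M.comp a b)) c := by
  have key : ∀ l : List A, (∀ x ∈ l, ∃ j, a j = x) →
      M.comp (M.dvec (M.comp a b)) (l.foldr (fun u acc => M.comp (M.dvec u) acc) c) =
        M.comp (M.dvec (M.comp a b)) c := by
    intro l
    induction l with
    | nil => intro _; rfl
    | cons x l ih =>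
      intro h
      obtain ⟨j, rfl⟩ := h x (by simp)
      rw [← ih fun y hy => h y (by simp [hy])]
      simp only [List.foldr_cons]
      rw [← hM.ax1]
      congr 1
      exact funext fun i => hM.dvec_dom i j a b
  exact key _ fun x hx => by simpa [List.mem_ofFn] using hx

theorem twisted_dom (hM : M.Ax) (i : Fin n) (a : Fin n → A) (b : A) :
    M.comp a (M.dom i b) = M.comp (M.dvec (M.comp a b)) (a i) := by
  rw [dom, hM.ax6, hM.ax6]
  set e := M.comp a b with he
  set x := M.comp (M.avec e) (M.dchain a (a i)) with hx
  -- `⟨De⟩` is below `⟨Ax⟩`, since `⟨De⟩∘x = 0`.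
  have hDx : M.comp (M.dvec e) x = M.zero :=
    hM.comp_comp_zero _ _ i (hM.dvec_anti e i) _
  apply hM.ax7 e
  · rw [hM.dvec_eq e i, hM.avec_idem, hM.avec_avec, ← hM.dvec_eq e i, hDx, hM.anti_zero_comp,
      hM.dvec_dchain]
  · rw [hM.avec_comm, ← hx, hM.avec_self, hM.comp_comp_zero _ _ i (hM.avec_dom e i)]

theorem comp_anti_zero (hM : M.Ax) (i j : Fin n) (a : Fin n → A) (b : A)
    (h : M.comp a (M.anti i b) = M.zero) : M.comp a (M.anti j b) = M.zero := by
  rw [hM.ax6] at h ⊢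
  set e := M.comp a b
  -- The tuple of the composite test `⟨Ae⟩∘⟨Da₁⟩∘⋯∘⟨Daₙ⟩`.
  let q : Fin n → A := fun k => M.comp (M.avec e) (M.dchain a (M.pi k))
  have hq : ∀ c, M.comp q c = M.comp (M.avec e) (M.dchain a c) := fun c => by
    simp only [q]
    rw [hM.ax1]
    congr 1
    exact (hM.foldr_eq_comp _ c).symm
  have hz : M.comp q (M.dom i (a i)) = M.zero :=
    hM.comp_dom_eq_zero q i _ (by rw [hq, h])
  have habs : M.dchain a (M.comp (M.dvec (a i)) (a j)) = M.dchain a (a j) :=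
    hM.foldr_absorb i _ _ _ (by simp [List.mem_ofFn])
  rw [← habs, ← hq]
  exact hM.comp_comp_zero _ _ i hz _

end Ax

end MAlg

/-- Domain laws: `⟨D(⟨a⟩∘b)⟩∘Dᵢaⱼ = Dᵢ(⟨a⟩∘b)`; the twisted law for domain
`⟨a⟩∘Dᵢb = ⟨D(⟨a⟩∘b)⟩∘aᵢ`; and if `⟨a⟩∘Aᵢb = 0` then `⟨a⟩∘Aⱼb = 0`. -/
theorem domain_laws {n : ℕ} (hn : 1 ≤ n) {A : Type*} [Inhabited A]
    (M : MAlg n A) (hM : M.Ax) :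
    (∀ (i j : Fin n) (a : Fin n → A) (b : A),
      M.comp (M.dvec (M.comp a b)) (M.dom i (a j)) = M.dom i (M.comp a b)) ∧
    (∀ (i : Fin n) (a : Fin n → A) (b : A),
      M.comp a (M.dom i b) = M.comp (M.dvec (M.comp a b)) (a i)) ∧
    (∀ (i j : Fin n) (a : Fin n → A) (b : A),
      M.comp a (M.anti i b) = M.zero → M.comp a (M.anti j b) = M.zero) := by
  exact ⟨fun i j a b => hM.dvec_dom i j a b, fun i a b => hM.twisted_dom i a b,
    fun i j a b h => hM.comp_anti_zero i j a b h⟩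
end
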